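/- arXiv:2308.03071 — 2 statements merged into one kernel-verified Lean document; each statement's English description precedes it below -/
import Mathlib

section
/- Let d ≥ 2 and let Λ ⊆ K̃^d be a lattice. Then the covering radius of Λ with respect to the sup-norm satisfies CovRad_{O^d}(Λ) = q^{-1}·λ_d(Λ); that is, sup_{w ∈ K̃^d} inf_{u ∈ Λ} ‖w − u‖ = q^{-1}·λ_d(Λ). -/
noncomputable section

open scoped Classical

variable (Fq : Type) [Field Fq] [Fintype Fq]

/-- `K̃ = 𝔽_q((x⁻¹))`, realized as formal Laurent series in `t = x⁻¹`. -/
abbrev Kt := LaurentSeries Fq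

/-- The element `x` of `K̃` (the inverse of the Laurent series variable). -/
def Kx : Kt Fq := HahnSeries.single (-1 : ℤ) 1

/-- Absolute value `|f| = q^{deg f}`, i.e. `q^{-order f}` in terms of `t = x⁻¹`. -/
def Kabs (f : Kt Fq) : ℝ := if f = 0 then 0 else (Fintype.card Fq : ℝ) ^ (-f.order)

/-- The ring embedding of `R = 𝔽_q[x]` into `K̃`. -/
def polyK : Polynomial Fq →+* Kt Fq := (Polynomial.aeval (Kx Fq)).toRingHom

/-- Sup norm on `K̃^d`. -/
def vnorm {d : ℕ} (v : Fin d → Kt Fq) : ℝ := ⨆ i, Kabs Fq (v i)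

/-- The lattice `g·R^d`. -/
def lattice {d : ℕ} (g : Matrix (Fin d) (Fin d) (Kt Fq)) : Set (Fin d → Kt Fq) :=
  {v | ∃ c : Fin d → Polynomial Fq, v = g.mulVec fun j => polyK Fq (c j)}

/-- `i`-th successive minimum of `Λ` with respect to a norm `nrm`: the least `r > 0` such that
`Λ` contains `i` linearly independent vectors of norm at most `r`. -/
def minimaN {d : ℕ} (nrm : (Fin d → Kt Fq) → ℝ) (Λ : Set (Fin d → Kt Fq)) (i : ℕ) : ℝ :=
  sInf {r : ℝ | 0 < r ∧ ∃ v : Fin i → Fin d → Kt Fq,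
    (∀ j, v j ∈ Λ) ∧ LinearIndependent (Kt Fq) v ∧ ∀ j, nrm (v j) ≤ r}

/-- `i`-th successive minimum with respect to the sup norm. -/
def minima {d : ℕ} (Λ : Set (Fin d → Kt Fq)) (i : ℕ) : ℝ := minimaN Fq (vnorm Fq) Λ i

/-- Covering radius of `Λ` with respect to the norm `nrm`. -/
def covRad {d : ℕ} (nrm : (Fin d → Kt Fq) → ℝ) (Λ : Set (Fin d → Kt Fq)) : ℝ :=
  ⨆ w : Fin d → Kt Fq, ⨅ u : Λ, nrm (w - u.1)

/-- Length of the shortest nonzero vector of `Λ`. -/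
def ell {d : ℕ} (Λ : Set (Fin d → Kt Fq)) : ℝ :=
  sInf {r : ℝ | ∃ v ∈ Λ, v ≠ 0 ∧ vnorm Fq v = r}

/-- `Λ` is well rounded: it contains `d` linearly independent vectors of norm `ℓ(Λ)`. -/
def IsWellRounded {d : ℕ} (Λ : Set (Fin d → Kt Fq)) : Prop :=
  ∃ v : Fin d → Fin d → Kt Fq, (∀ j, v j ∈ Λ) ∧ LinearIndependent (Kt Fq) v ∧
    ∀ j, vnorm Fq (v j) = ell Fq Λ

/-- The multiplicative "norm" `N(v) = ∏ |v i|`. -/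
def Nprod {d : ℕ} (v : Fin d → Kt Fq) : ℝ := ∏ i, Kabs Fq (v i)

/-- The Minkowski function `μ(Λ) = sup_w inf_{u ∈ Λ} N(w - u)`. -/
def mink {d : ℕ} (Λ : Set (Fin d → Kt Fq)) : ℝ :=
  ⨆ w : Fin d → Kt Fq, ⨅ u : Λ, Nprod Fq (w - u.1)

set_option linter.unusedSectionVars false

lemma q_gt_one : (1 : ℝ) < (Fintype.card Fq : ℝ) := by
  exact_mod_cast Fintype.one_lt_card

lemma q_pos : (0 : ℝ) < (Fintype.card Fq : ℝ) := lt_trans one_pos (q_gt_one Fq)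

lemma Kabs_zero : Kabs Fq 0 = 0 := by simp [Kabs]

lemma Kabs_nonneg (f : Kt Fq) : 0 ≤ Kabs Fq f := by
  unfold Kabs
  split_ifs
  · exact le_rfl
  · exact (zpow_pos (q_pos Fq) _).le

lemma Kabs_mul (f g : Kt Fq) : Kabs Fq (f * g) = Kabs Fq f * Kabs Fq g := by
  by_cases hf : f = 0
  · simp [hf, Kabs_zero]
  by_cases hg : g = 0
  · simp [hg, Kabs_zero]
  have hfg : f * g ≠ 0 := mul_ne_zero hf hg
  rw [Kabs, Kabs, Kabs, if_neg hf, if_neg hg, if_neg hfg, HahnSeries.order_mul hf hg, neg_add,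
    zpow_add₀ (q_pos Fq).ne']

lemma Kabs_neg (f : Kt Fq) : Kabs Fq (-f) = Kabs Fq f := by
  unfold Kabs
  simp [HahnSeries.order_neg]

lemma Kabs_add (f g : Kt Fq) : Kabs Fq (f + g) ≤ max (Kabs Fq f) (Kabs Fq g) := by
  by_cases hf : f = 0
  · simp [hf]
  by_cases hg : g = 0
  · simp [hg]
  by_cases hfg : f + g = 0
  · rw [hfg, Kabs_zero]
    exact le_max_of_le_left (Kabs_nonneg Fq f)
  have h := HahnSeries.min_order_le_order_add hfg
  rw [Kabs, Kabs, Kabs, if_neg hf, if_neg hg, if_neg hfg]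
  rcases min_le_iff.1 h with h | h
  · exact le_max_of_le_left (zpow_le_zpow_right₀ (q_gt_one Fq).le (neg_le_neg h))
  · exact le_max_of_le_right (zpow_le_zpow_right₀ (q_gt_one Fq).le (neg_le_neg h))

lemma Kabs_Kx : Kabs Fq (Kx Fq) = Fintype.card Fq := by
  have h : Kx Fq ≠ 0 := by
    simp [Kx]
  rw [Kabs, if_neg h, Kx, HahnSeries.order_single one_ne_zero]
  simp

lemma Kx_ne_zero : Kx Fq ≠ 0 := by simp [Kx]

lemma polyK_X : polyK Fq Polynomial.X = Kx Fq := by simp [polyK]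

lemma polyK_monomial (n : ℕ) (a : Fq) :
    polyK Fq (Polynomial.monomial n a) = HahnSeries.single (-(n : ℤ)) a := by
  have h : algebraMap Fq (LaurentSeries Fq) a = HahnSeries.single (0 : ℤ) a := by
    rw [HahnSeries.algebraMap_apply']
    simp
  have h2 : polyK Fq (Polynomial.monomial n a) = algebraMap Fq (LaurentSeries Fq) a * Kx Fq ^ n := by
    simp [polyK, Polynomial.aeval_monomial]
  rw [h2, h, Kx, HahnSeries.single_pow, HahnSeries.single_mul_single]
  simp

/-- fractional parts -/
lemma exists_frac (f : Kt Fq) :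
    ∃ p : Polynomial Fq, Kabs Fq (f - polyK Fq p) ≤ (Fintype.card Fq : ℝ)⁻¹ := by
  set M : ℕ := (-f.order).toNat + 1 with hM
  refine ⟨∑ n ∈ Finset.range M, Polynomial.monomial n (f.coeff (-(n : ℤ))), ?_⟩
  set g := f - polyK Fq (∑ n ∈ Finset.range M, Polynomial.monomial n (f.coeff (-(n : ℤ)))) with hg
  have hc : ∀ i : ℤ, i ≤ 0 → g.coeff i = 0 := by
    intro i hi
    obtain ⟨k, rfl⟩ : ∃ k : ℕ, i = -(k : ℤ) := ⟨(-i).toNat, by omega⟩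
    rw [hg, map_sum]
    simp only [polyK_monomial, HahnSeries.coeff_sub, HahnSeries.coeff_sum,
      HahnSeries.coeff_single, neg_inj, Nat.cast_inj]
    rw [Finset.sum_ite_eq]
    split_ifs with h
    · simp
    · rw [HahnSeries.coeff_eq_zero_of_lt_order, sub_zero]
      simp at h
      omega
  by_cases h0 : g = 0
  · rw [h0, Kabs_zero]
    exact inv_nonneg.2 (q_pos Fq).le
  · rw [Kabs, if_neg h0, ← zpow_neg_one]
    refine zpow_le_zpow_right₀ (q_gt_one Fq).le (neg_le_neg ?_)
    by_contra hlt
    exact h0 (HahnSeries.coeff_order_eq_zero.1 (hc g.order (by omega)))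

section vec
variable {d : ℕ}

lemma vnorm_nonneg (v : Fin d → Kt Fq) : 0 ≤ vnorm Fq v :=
  Real.iSup_nonneg fun i => Kabs_nonneg Fq (v i)

lemma Kabs_le_vnorm (v : Fin d → Kt Fq) (i : Fin d) : Kabs Fq (v i) ≤ vnorm Fq v :=
  le_ciSup (f := fun i => Kabs Fq (v i)) (Set.finite_range _).bddAbove i

lemma vnorm_le {v : Fin d → Kt Fq} {r : ℝ} (hr : 0 ≤ r) (h : ∀ i, Kabs Fq (v i) ≤ r) :
    vnorm Fq v ≤ r := Real.iSup_le h hr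

lemma vnorm_zero : vnorm Fq (0 : Fin d → Kt Fq) = 0 :=
  le_antisymm (vnorm_le Fq le_rfl fun i => by simp [Kabs_zero]) (vnorm_nonneg Fq _)

lemma vnorm_neg (v : Fin d → Kt Fq) : vnorm Fq (-v) = vnorm Fq v := by
  simp [vnorm, Kabs_neg]

lemma vnorm_add (v w : Fin d → Kt Fq) : vnorm Fq (v + w) ≤ max (vnorm Fq v) (vnorm Fq w) :=
  vnorm_le Fq (le_max_of_le_left (vnorm_nonneg Fq v)) fun i =>
    (Kabs_add Fq (v i) (w i)).trans
      (max_le_max (Kabs_le_vnorm Fq v i) (Kabs_le_vnorm Fq w i))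

lemma vnorm_sub (v w : Fin d → Kt Fq) : vnorm Fq (v - w) ≤ max (vnorm Fq v) (vnorm Fq w) := by
  rw [sub_eq_add_neg, ← vnorm_neg Fq w]
  exact vnorm_add Fq v (-w)

lemma vnorm_smul_le (a : Kt Fq) (v : Fin d → Kt Fq) :
    vnorm Fq (a • v) ≤ Kabs Fq a * vnorm Fq v :=
  vnorm_le Fq (mul_nonneg (Kabs_nonneg Fq a) (vnorm_nonneg Fq v)) fun i => by
    rw [Pi.smul_apply, smul_eq_mul, Kabs_mul]
    exact mul_le_mul_of_nonneg_left (Kabs_le_vnorm Fq v i) (Kabs_nonneg Fq a)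

lemma vnorm_sum_le {ι : Type*} (s : Finset ι) (f : ι → Fin d → Kt Fq) {r : ℝ} (hr : 0 ≤ r)
    (h : ∀ i ∈ s, vnorm Fq (f i) ≤ r) : vnorm Fq (∑ i ∈ s, f i) ≤ r := by
  refine Finset.sum_induction f (fun v => vnorm Fq v ≤ r) ?_ ?_ h
  · intro a b ha hb
    exact (vnorm_add Fq a b).trans (max_le ha hb)
  · rw [vnorm_zero]
    exact hr

variable (g : Matrix (Fin d) (Fin d) (Kt Fq))

lemma lat_zero : (0 : Fin d → Kt Fq) ∈ lattice Fq g :=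
  ⟨0, by
    have : (fun j : Fin d => polyK Fq ((0 : Fin d → Polynomial Fq) j)) = 0 := by
      ext1 j
      simp
    rw [this, Matrix.mulVec_zero]⟩

lemma lat_add {u v : Fin d → Kt Fq} (hu : u ∈ lattice Fq g) (hv : v ∈ lattice Fq g) :
    u + v ∈ lattice Fq g := by
  obtain ⟨a, rfl⟩ := hu
  obtain ⟨b, rfl⟩ := hv
  refine ⟨a + b, ?_⟩
  rw [← Matrix.mulVec_add]
  congr 1
  ext1 j
  simp

lemma lat_smul (p : Polynomial Fq) {u : Fin d → Kt Fq} (hu : u ∈ lattice Fq g) :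
    polyK Fq p • u ∈ lattice Fq g := by
  obtain ⟨a, rfl⟩ := hu
  refine ⟨p • a, ?_⟩
  rw [← Matrix.mulVec_smul]
  congr 1
  ext1 j
  simp

lemma lat_sub {u v : Fin d → Kt Fq} (hu : u ∈ lattice Fq g) (hv : v ∈ lattice Fq g) :
    u - v ∈ lattice Fq g := by
  have h := lat_add Fq g hu (lat_smul Fq g (-1) hv)
  rwa [map_neg, map_one, neg_one_smul, ← sub_eq_add_neg] at h

lemma lat_sum {ι : Type*} (s : Finset ι) (f : ι → Fin d → Kt Fq)
    (h : ∀ i ∈ s, f i ∈ lattice Fq g) : ∑ i ∈ s, f i ∈ lattice Fq g :=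
  Finset.sum_induction f (fun v => v ∈ lattice Fq g) (fun _ _ => lat_add Fq g)
    (lat_zero Fq g) h

lemma lat_col (j : Fin d) : g.col j ∈ lattice Fq g := by
  refine ⟨Pi.single j 1, ?_⟩
  have : (fun k : Fin d => polyK Fq ((Pi.single j 1 : Fin d → Polynomial Fq) k))
      = Pi.single j 1 := by
    ext1 k
    by_cases h : k = j
    · subst h
      simp
    · simp [h]
  rw [this, Matrix.mulVec_single_one]

lemma col_indep (hg : g.det ≠ 0) : LinearIndependent (Kt Fq) g.col := by
  rw [Matrix.linearIndependent_cols_iff_isUnit, Matrix.isUnit_iff_isUnit_det]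
  exact isUnit_iff_ne_zero.2 hg

/-- upper bound for a single target -/
lemma near_of_indep {v : Fin d → Fin d → Kt Fq} (hv : ∀ j, v j ∈ lattice Fq g)
    (hi : LinearIndependent (Kt Fq) v) {r : ℝ} (hr : 0 < r) (hn : ∀ j, vnorm Fq (v j) ≤ r)
    (w : Fin d → Kt Fq) :
    ∃ u ∈ lattice Fq g, vnorm Fq (w - u) ≤ (Fintype.card Fq : ℝ)⁻¹ * r := by
  have hq : (0 : ℝ) ≤ (Fintype.card Fq : ℝ)⁻¹ := inv_nonneg.2 (q_pos Fq).le
  have hs : Submodule.span (Kt Fq) (Set.range v) = ⊤ :=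
    hi.span_eq_top_of_card_eq_finrank' (by simp)
  have hw : w ∈ Submodule.span (Kt Fq) (Set.range v) := by
    rw [hs]
    trivial
  obtain ⟨a, rfl⟩ := (Submodule.mem_span_range_iff_exists_fun (Kt Fq)).1 hw
  choose p hp using fun j => exists_frac Fq (a j)
  refine ⟨∑ j, polyK Fq (p j) • v j,
    lat_sum Fq g _ _ fun j _ => lat_smul Fq g (p j) (hv j), ?_⟩
  rw [← Finset.sum_sub_distrib]
  refine vnorm_sum_le Fq _ _ (mul_nonneg hq hr.le) fun j _ => ?_
  rw [← sub_smul]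
  exact (vnorm_smul_le Fq _ _).trans
    (mul_le_mul (hp j) (hn j) (vnorm_nonneg Fq _) hq)

lemma bdd_inf (w : Fin d → Kt Fq) :
    BddBelow (Set.range fun u : lattice Fq g => vnorm Fq (w - u.1)) :=
  ⟨0, by
    rintro _ ⟨u, rfl⟩
    exact vnorm_nonneg Fq _⟩

/-- lower bound, main argument -/
lemma lat_sub_V {V : Submodule (Kt Fq) (Fin d → Kt Fq)} {L : ℝ}
    (hV : ∀ u ∈ lattice Fq g, vnorm Fq u < L → u ∈ V)
    (hnear : ∀ w, ∃ u ∈ lattice Fq g, vnorm Fq (w - u) < (Fintype.card Fq : ℝ)⁻¹ * L) :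
    ∀ u ∈ lattice Fq g, u ∈ V := by
  have hq := q_pos Fq
  have hq1 := q_gt_one Fq
  set q : ℝ := (Fintype.card Fq : ℝ) with hqdef
  have hL' : 0 < q⁻¹ * L := by
    obtain ⟨u, _, hu⟩ := hnear 0
    exact lt_of_le_of_lt (vnorm_nonneg Fq _) hu
  have hL : 0 < L := by
    by_contra h
    exact absurd hL' (not_lt.2 (mul_nonpos_of_nonneg_of_nonpos (inv_nonneg.2 hq.le) (not_lt.1 h)))
  have hlt : q⁻¹ * L < L := by
    have := inv_lt_one_of_one_lt₀ hq1
    nlinarith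
  have key : ∀ n : ℕ, ∀ w : Fin d → Kt Fq, vnorm Fq w < q ^ n * (q⁻¹ * L) →
      ∀ u ∈ lattice Fq g, vnorm Fq (w - u) < q⁻¹ * L → u ∈ V := by
    intro n
    induction n with
    | zero =>
      intro w hw u hu hwu
      rw [pow_zero, one_mul] at hw
      apply hV u hu
      have : u = w - (w - u) := by abel
      rw [this]
      exact (vnorm_sub Fq _ _).trans_lt ((max_lt hw hwu).trans hlt)
    | succ n ih =>
      intro w hw u hu hwu
      have hx := Kx_ne_zero Fq
      have hxw : w = Kx Fq • ((Kx Fq)⁻¹ • w) := by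
        rw [smul_smul, mul_inv_cancel₀ hx, one_smul]
      set w' := (Kx Fq)⁻¹ • w with hw'
      have hinv : Kabs Fq (Kx Fq)⁻¹ = q⁻¹ := by
        have h1 : Kabs Fq (Kx Fq) * Kabs Fq (Kx Fq)⁻¹ = 1 := by
          rw [← Kabs_mul, mul_inv_cancel₀ hx]
          simp [Kabs]
        rw [Kabs_Kx] at h1
        exact eq_inv_of_mul_eq_one_right h1
      have hw'n : vnorm Fq w' < q ^ n * (q⁻¹ * L) := by
        have h1 := vnorm_smul_le Fq (Kx Fq)⁻¹ w
        rw [hinv] at h1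
        refine h1.trans_lt ?_
        calc q⁻¹ * vnorm Fq w < q⁻¹ * (q ^ (n + 1) * (q⁻¹ * L)) :=
              mul_lt_mul_of_pos_left hw (inv_pos.2 hq)
          _ = q ^ n * (q⁻¹ * L) := by
              rw [pow_succ]
              field_simp
      obtain ⟨u', hu', hwu'⟩ := hnear w'
      have hu'V := ih w' hw'n u' hu' hwu'
      have hxu' : Kx Fq • u' ∈ lattice Fq g := by
        rw [← polyK_X]
        exact lat_smul Fq g _ hu'
      have hdV : u - Kx Fq • u' ∈ V := by
        apply hV _ (lat_sub Fq g hu hxu')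
        have : u - Kx Fq • u' = Kx Fq • (w' - u') - (w - u) := by
          rw [smul_sub, ← hxw]
          abel
        rw [this]
        refine (vnorm_sub Fq _ _).trans_lt (max_lt ?_ (hwu.trans hlt))
        refine (vnorm_smul_le Fq _ _).trans_lt ?_
        rw [Kabs_Kx]
        calc q * vnorm Fq (w' - u') < q * (q⁻¹ * L) := mul_lt_mul_of_pos_left hwu' hq
          _ = L := by field_simp
      have := V.add_mem hdV (V.smul_mem (Kx Fq) hu'V)
      simpa using this
  intro u hu
  obtain ⟨n, hn⟩ := pow_unbounded_of_one_lt (vnorm Fq u / (q⁻¹ * L)) hq1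
  refine key n u ((div_lt_iff₀ hL').1 hn) u hu ?_
  rw [sub_self, vnorm_zero]
  exact hL'

end vec

/-- The covering radius of a lattice with respect to the sup norm equals
`q⁻¹·λ_d(Λ)`. -/
theorem covRad_eq_inv_q_mul_lambda_d {d : ℕ} (hd : 2 ≤ d)
    (g : Matrix (Fin d) (Fin d) (Kt Fq)) (hg : g.det ≠ 0) :
    covRad Fq (vnorm Fq) (lattice Fq g)
      = (Fintype.card Fq : ℝ)⁻¹ * minima Fq (lattice Fq g) d := by
  have hq := q_pos Fq
  have hne : Nonempty (lattice Fq g) := ⟨⟨0, lat_zero Fq g⟩⟩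
  have hFd : Nonempty (Fin d) := ⟨⟨0, by omega⟩⟩
  set S : Set ℝ := {r : ℝ | 0 < r ∧ ∃ v : Fin d → Fin d → Kt Fq,
    (∀ j, v j ∈ lattice Fq g) ∧ LinearIndependent (Kt Fq) v ∧ ∀ j, vnorm Fq (v j) ≤ r} with hS
  have hmin : minima Fq (lattice Fq g) d = sInf S := rfl
  have hSbdd : BddBelow S := ⟨0, fun r hr => hr.1.le⟩
  have hmem : ∀ v : Fin d → Fin d → Kt Fq, (∀ j, v j ∈ lattice Fq g) →
      LinearIndependent (Kt Fq) v → ∀ r : ℝ, 0 < r → (∀ j, vnorm Fq (v j) ≤ r) → r ∈ S :=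
    fun v h1 h2 r h3 h4 => ⟨h3, v, h1, h2, h4⟩
  have hSne : S.Nonempty := by
    refine ⟨(⨆ j, vnorm Fq (g.col j)) + 1, hmem _ (lat_col Fq g) (col_indep Fq g hg) _ ?_ ?_⟩
    · have := Real.iSup_nonneg fun j => vnorm_nonneg Fq (g.col j)
      linarith
    · intro j
      have := le_ciSup (f := fun j => vnorm Fq (g.col j)) (Set.finite_range _).bddAbove j
      linarith
  have hup : ∀ r ∈ S, ∀ w : Fin d → Kt Fq,
      (⨅ u : lattice Fq g, vnorm Fq (w - u.1)) ≤ (Fintype.card Fq : ℝ)⁻¹ * r := by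
    rintro r ⟨hr, v, hv, hi, hn⟩ w
    obtain ⟨u, hu, hwu⟩ := near_of_indep Fq g hv hi hr hn w
    exact (ciInf_le (bdd_inf Fq g w) ⟨u, hu⟩).trans hwu
  rw [hmin]
  apply le_antisymm
  · rw [← div_le_iff₀' (inv_pos.2 hq)]
    refine le_csInf hSne fun r hr => ?_
    rw [div_le_iff₀' (inv_pos.2 hq)]
    exact ciSup_le (hup r hr)
  · by_contra hlt
    rw [not_le] at hlt
    obtain ⟨r0, hr0⟩ := hSne
    have hb : BddAbove (Set.range fun w : Fin d → Kt Fq =>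
        ⨅ u : lattice Fq g, vnorm Fq (w - u.1)) :=
      ⟨_, by
        rintro _ ⟨w, rfl⟩
        exact hup r0 hr0 w⟩
    have hnear : ∀ w : Fin d → Kt Fq, ∃ u ∈ lattice Fq g,
        vnorm Fq (w - u) < (Fintype.card Fq : ℝ)⁻¹ * sInf S := by
      intro w
      obtain ⟨u, hu⟩ := exists_lt_of_ciInf_lt ((le_ciSup hb w).trans_lt hlt)
      exact ⟨u.1, u.2, hu⟩
    set T : Set (Fin d → Kt Fq) := {u | u ∈ lattice Fq g ∧ vnorm Fq u < sInf S} with hT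
    have hall := lat_sub_V Fq g (V := Submodule.span (Kt Fq) T)
      (fun u hu hn => Submodule.subset_span ⟨hu, hn⟩) hnear
    have htop : Submodule.span (Kt Fq) T = ⊤ := by
      rw [eq_top_iff, ← (col_indep Fq g hg).span_eq_top_of_card_eq_finrank' (by simp),
        Submodule.span_le]
      rintro _ ⟨j, rfl⟩
      exact hall _ (lat_col Fq g j)
    have hfin : Module.finrank (Kt Fq) (Submodule.span (Kt Fq) T) = d := by
      rw [htop, finrank_top]
      simp
    obtain ⟨f, hf, -, hfi⟩ := Submodule.exists_fun_fin_finrank_span_eq (Kt Fq) T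
    have hpos : 0 < sInf S := by
      obtain ⟨u, _, hu⟩ := hnear 0
      exact (mul_pos_iff_of_pos_left (inv_pos.2 hq)).1 (lt_of_le_of_lt (vnorm_nonneg Fq _) hu)
    set f' : Fin d → Fin d → Kt Fq := fun j => f (Fin.cast hfin.symm j) with hf'
    have hfi' : LinearIndependent (Kt Fq) f' := hfi.comp _ (Fin.cast_injective hfin.symm)
    obtain ⟨j0, hj0⟩ := Finite.exists_max fun j => vnorm Fq (f' j)
    have hj0lt : vnorm Fq (f' j0) < sInf S := (hf _).2
    have hm := hmem f' (fun j => (hf _).1) hfi' (max (vnorm Fq (f' j0)) (sInf S / 2))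
      (lt_max_of_lt_right (half_pos hpos)) (fun j => le_max_of_le_left (hj0 j))
    exact absurd (csInf_le hSbdd hm) (not_le.2 (max_lt hj0lt (half_lt_self hpos)))
end
end

section
/- Let d ≥ 2. For every unimodular lattice Λ ⊆ K̃^d, μ(Λ) ≤ q^{-d}, where μ(Λ) = sup_{w ∈ K̃^d} inf_{u ∈ Λ} ∏_{i=1}^d |w_i − u_i|. (Function field analogue of Minkowski's conjecture on the multiplicative covering radius.) -/
noncomputable section

open scoped Classical

variable (Fq : Type) [Field Fq] [Fintype Fq]

set_option linter.unusedSectionVars false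

/-- `f` has order at least `k`. -/
def AA (k : ℤ) (f : Kt Fq) : Prop := ∀ n : ℤ, n < k → f.coeff n = 0

lemma AA_zero (k : ℤ) : AA Fq k 0 := fun n _ => by simp

lemma AA_add {k : ℤ} {f h : Kt Fq} (hf : AA Fq k f) (hh : AA Fq k h) : AA Fq k (f + h) :=
  fun n hn => by rw [HahnSeries.coeff_add, hf n hn, hh n hn, add_zero]

lemma AA_sum {k : ℤ} {ι : Type} (s : Finset ι) (f : ι → Kt Fq) (hf : ∀ i ∈ s, AA Fq k (f i)) :
    AA Fq k (∑ i ∈ s, f i) := by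
  induction s using Finset.induction_on with
  | empty => simpa using AA_zero Fq k
  | insert a s ha ih =>
    rw [Finset.sum_insert ha]
    exact AA_add Fq (hf a (by simp)) (ih fun i hi => hf i (by simp [hi]))

lemma AA_mono {k l : ℤ} (h : k ≤ l) {f : Kt Fq} (hf : AA Fq l f) : AA Fq k f :=
  fun n hn => hf n (by omega)

lemma AA_mul {k l : ℤ} {f h : Kt Fq} (hf : AA Fq k f) (hh : AA Fq l h) : AA Fq (k + l) (f * h) := by
  by_cases hf0 : f = 0
  · subst hf0; rw [zero_mul]; exact AA_zero Fq _
  by_cases hh0 : h = 0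
  · subst hh0; rw [mul_zero]; exact AA_zero Fq _
  have h1 := (HahnSeries.le_order_iff_forall hf0).2 hf
  have h2 := (HahnSeries.le_order_iff_forall hh0).2 hh
  refine (HahnSeries.le_order_iff_forall (mul_ne_zero hf0 hh0)).1 ?_
  rw [HahnSeries.order_mul hf0 hh0]; omega

lemma AA_exists (f : Kt Fq) : ∃ M : ℕ, ∀ k : ℕ, M ≤ k → AA Fq (-(k : ℤ)) f := by
  refine ⟨(-f.order).toNat, fun k hk n hn => HahnSeries.coeff_eq_zero_of_lt_order ?_⟩
  omega

lemma AA_matrix {d : ℕ} (g : Matrix (Fin d) (Fin d) (Kt Fq)) :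
    ∃ M : ℕ, ∀ i j, AA Fq (-(M : ℤ)) (g i j) := by
  choose m hm using fun i j => AA_exists Fq (g i j)
  refine ⟨∑ i, ∑ j, m i j, fun i j => hm i j _ ?_⟩
  exact (Finset.single_le_sum (f := fun j => m i j) (fun _ _ => Nat.zero_le _) (Finset.mem_univ j)).trans
    (Finset.single_le_sum (f := fun i => ∑ j, m i j) (fun _ _ => Nat.zero_le _) (Finset.mem_univ i))

lemma AA_mulVec {d : ℕ} {k l : ℤ} (g : Matrix (Fin d) (Fin d) (Kt Fq)) (v : Fin d → Kt Fq)
    (hg : ∀ i j, AA Fq k (g i j)) (hv : ∀ j, AA Fq l (v j)) (i : Fin d) :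
    AA Fq (k + l) (g.mulVec v i) := by
  unfold Matrix.mulVec dotProduct
  exact AA_sum Fq _ _ fun j _ => AA_mul Fq (hg i j) (hv j)

lemma card_gt : (1 : ℝ) < Fintype.card Fq := by
  exact_mod_cast Fintype.one_lt_card

lemma Kabs_le {k : ℤ} {f : Kt Fq} (hf : AA Fq k f) : Kabs Fq f ≤ (Fintype.card Fq : ℝ) ^ (-k) := by
  unfold Kabs
  split_ifs with h
  · positivity
  · have := (HahnSeries.le_order_iff_forall h).2 hf
    exact zpow_le_zpow_right₀ (card_gt Fq).le (by omega)

lemma Kabs_one {f : Kt Fq} (h : Kabs Fq f = 1) : f ≠ 0 ∧ f.order = 0 := by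
  unfold Kabs at h
  split_ifs at h with h0
  · simp at h
  · refine ⟨h0, ?_⟩
    have := (zpow_eq_one_iff_right₀ (by positivity) (card_gt Fq).ne').1 h
    omega

lemma Kx_pow (n : ℕ) : (Kx Fq) ^ n = HahnSeries.single (-(n : ℤ)) 1 := by
  unfold Kx
  rw [HahnSeries.single_pow]; simp

lemma polyK_coeff (p : Polynomial Fq) (k : ℤ) :
    (polyK Fq p).coeff k = if k ≤ 0 then p.coeff (-k).toNat else 0 := by
  induction p using Polynomial.induction_on' with
  | add p r hp hr =>
    rw [map_add, HahnSeries.coeff_add, hp, hr]; split_ifs <;> simp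
  | monomial n a =>
    rw [polyK_monomial, HahnSeries.coeff_single, Polynomial.coeff_monomial]
    split_ifs <;> first | rfl | omega

lemma polyK_AA_one {p : Polynomial Fq} (h : AA Fq 1 (polyK Fq p)) : p = 0 := by
  ext n
  have := h (-(n : ℤ)) (by omega)
  rw [polyK_coeff] at this
  simpa using this

lemma polyK_inj : Function.Injective (polyK Fq) := by
  rw [injective_iff_map_eq_zero]
  intro p hp
  exact polyK_AA_one Fq (by rw [hp]; exact AA_zero Fq 1)

lemma polyK_AA_deg {p : Polynomial Fq} {n : ℕ} (h : ∀ k, n ≤ k → p.coeff k = 0) :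
    AA Fq (1 - (n : ℤ)) (polyK Fq p) := by
  intro k hk
  rw [polyK_coeff]
  split_ifs with h0
  · exact h _ (by omega)
  · rfl

lemma exists_poly (f : Kt Fq) : ∃ p : Polynomial Fq, AA Fq 1 (f - polyK Fq p) := by
  obtain ⟨M, hM⟩ := AA_exists Fq f
  refine ⟨∑ n ∈ Finset.range (M + 1), Polynomial.monomial n (f.coeff (-(n : ℤ))), fun k hk => ?_⟩
  rw [HahnSeries.coeff_sub, polyK_coeff, if_pos (by omega)]
  simp only [Polynomial.finsetSum_coeff, Polynomial.coeff_monomial, Finset.sum_ite_eq', Finset.mem_range]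
  split_ifs with h
  · rw [show -(((-k).toNat : ℕ) : ℤ) = k by omega, sub_self]
  · rw [hM M le_rfl k (by omega), sub_zero]

lemma exists_ps {f : Kt Fq} (h : AA Fq 0 f) : ∃ p : PowerSeries Fq,
    HahnSeries.ofPowerSeries ℤ Fq p = f ∧ PowerSeries.constantCoeff p = f.coeff 0 := by
  have key : HahnSeries.ofPowerSeries ℤ Fq (PowerSeries.mk fun n => f.coeff (n : ℤ)) = f := by
    ext k
    rcases lt_or_ge k 0 with hk | hk
    · rw [h k hk, HahnSeries.ofPowerSeries_apply]
      apply HahnSeries.embDomain_of_notMem_range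
      rintro ⟨n, hn⟩
      simp at hn; omega
    · lift k to ℕ using hk
      rw [HahnSeries.ofPowerSeries_apply_coeff]; simp
  exact ⟨_, key, by rw [← PowerSeries.coeff_zero_eq_constantCoeff_apply]; simp⟩

lemma det_unit {d : ℕ} (U : Matrix (Fin d) (Fin d) (Kt Fq)) (h0 : ∀ i j, AA Fq 0 (U i j))
    (h1 : ∀ i j, i ≠ j → (U i j).coeff 0 = 0) (h2 : ∀ i, (U i i).coeff 0 ≠ 0) :
    U.det ≠ 0 ∧ U.det.order = 0 := by
  choose P hP hc using fun i j => exists_ps Fq (h0 i j)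
  have hU : U = (HahnSeries.ofPowerSeries ℤ Fq).mapMatrix (Matrix.of P) := by
    ext i j : 2; simp [hP]
  have hdet : U.det = HahnSeries.ofPowerSeries ℤ Fq (Matrix.of P).det := by
    rw [RingHom.map_det, ← hU]
  have hcc : PowerSeries.constantCoeff (Matrix.of P).det ≠ 0 := by
    rw [RingHom.map_det]
    have : (PowerSeries.constantCoeff (R := Fq)).mapMatrix (Matrix.of P)
        = Matrix.diagonal fun i => (U i i).coeff 0 := by
      ext i j
      by_cases hij : i = j
      · subst hij; simp [hc]
      · simp [hc, hij, h1 i j hij]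
    rw [this, Matrix.det_diagonal]
    exact Finset.prod_ne_zero_iff.2 fun i _ => h2 i
  have hc0 : U.det.coeff 0 ≠ 0 := by
    have := HahnSeries.ofPowerSeries_apply_coeff (Γ := ℤ) (Matrix.of P).det 0
    rw [hdet]
    simp only [Nat.cast_zero] at this
    rw [this, PowerSeries.coeff_zero_eq_constantCoeff_apply]; exact hcc
  have hne : U.det ≠ 0 := fun h => hc0 (by rw [h]; simp)
  refine ⟨hne, le_antisymm (HahnSeries.order_le_of_coeff_ne_zero hc0) ?_⟩
  refine (HahnSeries.le_order_iff_forall hne).2 ?_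
  rw [Matrix.det_apply]
  refine AA_sum Fq _ _ fun σ _ => ?_
  have hp : ∀ s : Finset (Fin d), AA Fq 0 (∏ i ∈ s, U (σ i) i) := by
    intro s
    induction s using Finset.induction_on with
    | empty =>
      intro n hn
      simp [HahnSeries.coeff_one, hn.ne]
    | insert a s ha ih =>
      rw [Finset.prod_insert ha]
      exact AA_mul Fq (h0 _ _) ih
  intro n hn
  rcases Int.units_eq_one_or (Equiv.Perm.sign σ) with h | h <;> simp [h, hp _ n hn]

/-- the lattice meets the box trivially -/
def Good {d : ℕ} (g : Matrix (Fin d) (Fin d) (Kt Fq)) (b : Fin d → ℤ) : Prop :=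
  ∀ c : Fin d → Polynomial Fq,
    (∀ i, AA Fq (b i + 1) (g.mulVec (fun j => polyK Fq (c j)) i)) → c = 0

lemma exists_good {d : ℕ} (g : Matrix (Fin d) (Fin d) (Kt Fq)) (hg : g.det ≠ 0) :
    ∃ b, Good Fq g b := by
  obtain ⟨M, hM⟩ := AA_matrix Fq g⁻¹
  refine ⟨fun _ => M, fun c hc => ?_⟩
  have h := AA_mulVec Fq g⁻¹ _ hM hc
  rw [Matrix.mulVec_mulVec, Matrix.nonsing_inv_mul _ (isUnit_iff_ne_zero.2 hg), Matrix.one_mulVec] at h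
  funext j
  exact polyK_AA_one Fq (by simpa using h j)

lemma good_bdd {d : ℕ} (g : Matrix (Fin d) (Fin d) (Kt Fq)) :
    ∃ B : ℤ, ∀ b, Good Fq g b → B ≤ ∑ i, b i := by
  obtain ⟨M, hM⟩ := AA_matrix Fq g
  refine ⟨-(d * M), fun b hb => ?_⟩
  obtain ⟨n, hn⟩ : ∃ n : ℕ, ∀ i, 0 ≤ b i + M + n := by
    refine ⟨∑ i, (b i).natAbs, fun i => ?_⟩
    have := Finset.single_le_sum (f := fun i => (b i).natAbs) (fun _ _ => Nat.zero_le _)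
      (Finset.mem_univ i)
    omega
  let C : (Fin d × Fin n → Fq) → Fin d → Polynomial Fq :=
    fun f j => ∑ k : Fin n, Polynomial.monomial (k : ℕ) (f (j, k))
  have hCcoeff : ∀ f j (k : Fin n), (C f j).coeff k = f (j, k) := by
    intro f j k
    simp [C, Polynomial.finsetSum_coeff, Polynomial.coeff_monomial, Fin.val_inj]
  have hCdeg : ∀ f j k, n ≤ k → (C f j).coeff k = 0 := by
    intro f j k hk
    simp only [C, Polynomial.finsetSum_coeff, Polynomial.coeff_monomial]
    exact Finset.sum_eq_zero fun x _ => if_neg (by have := x.2; omega)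
  let F : (Fin d × Fin n → Fq) → ((Σ i : Fin d, Fin (b i + M + n).toNat) → Fq) :=
    fun f s => (g.mulVec (fun j => polyK Fq (C f j)) s.1).coeff (1 - M - n + (s.2 : ℕ))
  have hF : Function.Injective F := by
    intro f f' hff
    have hz : (fun j => C f j - C f' j) = 0 := by
      apply hb
      have e : (fun j => polyK Fq (C f j - C f' j)) =
        (fun j => polyK Fq (C f j)) - (fun j => polyK Fq (C f' j)) := by
        funext j; simp
      intro i k hk
      rcases lt_or_ge k (1 - M - n) with h1 | h1
      · refine AA_mulVec Fq (k := -(M : ℤ)) (l := 1 - n) g _ hM (fun j => ?_) i k (by omega)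
        exact polyK_AA_deg Fq fun k hk => by
          rw [Polynomial.coeff_sub, hCdeg _ _ _ hk, hCdeg _ _ _ hk, sub_zero]
      · have := congrFun hff ⟨i, ⟨(k - (1 - M - n)).toNat, by omega⟩⟩
        simp only [F] at this
        rw [show (1 - M - n + (((k - (1 - M - n)).toNat : ℕ) : ℤ) : ℤ) = k by omega] at this
        rw [e, Matrix.mulVec_sub, Pi.sub_apply, HahnSeries.coeff_sub, this, sub_self]
    funext ⟨j, k⟩
    rw [← hCcoeff f, ← hCcoeff f', sub_eq_zero.1 (congrFun hz j)]
  have hcard := Fintype.card_le_of_injective F hF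
  simp only [Fintype.card_fun, Fintype.card_prod, Fintype.card_fin, Fintype.card_sigma] at hcard
  have hle := (Nat.pow_le_pow_iff_right Fintype.one_lt_card).1 hcard
  zify at hle
  rw [Finset.sum_congr rfl fun i _ => Int.toNat_of_nonneg (hn i)] at hle
  simp [Finset.sum_add_distrib] at hle
  linarith

lemma exists_min {d : ℕ} (g : Matrix (Fin d) (Fin d) (Kt Fq)) (hg : g.det ≠ 0) :
    ∃ b, Good Fq g b ∧ ∀ b', Good Fq g b' → ∑ i, b i ≤ ∑ i, b' i := by
  obtain ⟨B, hB⟩ := good_bdd Fq g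
  obtain ⟨b₀, hb₀⟩ := exists_good Fq g hg
  obtain ⟨z, ⟨b, hb, rfl⟩, hz⟩ := Int.exists_least_of_bdd
    (P := fun z => ∃ b, Good Fq g b ∧ ∑ i, b i = z)
    ⟨B, by rintro _ ⟨b, hb, rfl⟩; exact hB b hb⟩ ⟨_, b₀, hb₀, rfl⟩
  exact ⟨b, hb, fun b' hb' => hz _ ⟨b', hb', rfl⟩⟩

lemma main_aux {d : ℕ} (g : Matrix (Fin d) (Fin d) (Kt Fq)) (hg : Kabs Fq g.det = 1) :
    ∃ b : Fin d → ℤ, ∑ i, b i = 0 ∧ ∀ w : Fin d → Kt Fq, ∃ c : Fin d → Polynomial Fq,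
      ∀ i, AA Fq (b i + 1) (w i - g.mulVec (fun j => polyK Fq (c j)) i) := by
  obtain ⟨hg0, hg1⟩ := Kabs_one Fq hg
  obtain ⟨b, hb, hmin⟩ := exists_min Fq g hg0
  -- stuck
  have hstuck : ∀ i, ∃ c : Fin d → Polynomial Fq, c ≠ 0 ∧
      ∀ l, AA Fq (if l = i then b i else b l + 1) (g.mulVec (fun j => polyK Fq (c j)) l) := by
    intro i
    by_contra! hcon
    have hgood : Good Fq g (fun l => if l = i then b l - 1 else b l) := by
      intro c hc
      by_contra hne
      obtain ⟨l, hl⟩ := hcon c hne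
      apply hl
      have := hc l
      by_cases h : l = i
      · subst h; simpa using this
      · simpa [h] using this
    have h2 := hmin _ hgood
    have h3 : ∑ l, (if l = i then b l - 1 else b l) = ∑ l, b l - 1 := by
      have : ∀ l, (if l = i then b l - 1 else b l) = b l - (if l = i then 1 else 0) := by
        intro l; split_ifs <;> simp
      rw [Finset.sum_congr rfl fun l _ => this l, Finset.sum_sub_distrib]; simp
    omega
  choose P hP0 hP using hstuck
  -- column `j` of `PM` is `P j`
  let PM : Matrix (Fin d) (Fin d) (Polynomial Fq) := Matrix.of fun i j => P j i
  let V : Matrix (Fin d) (Fin d) (Kt Fq) := g * (polyK Fq).mapMatrix PM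
  have hV : ∀ i j, V i j = g.mulVec (fun l => polyK Fq (P j l)) i := by
    intro i j; simp [V, Matrix.mul_apply, Matrix.mulVec, dotProduct, PM]
  have hVd : ∀ i, (V i i).coeff (b i) ≠ 0 := by
    intro i h
    apply hP0 i
    apply hb
    intro l
    have := hP i l
    by_cases hl : l = i
    · subst hl
      rw [if_pos rfl] at this
      intro n hn
      rcases lt_or_eq_of_le (show n ≤ b l by omega) with h' | h'
      · exact this n h'
      · rw [h', ← hV]; exact h
    · rwa [if_neg hl] at this
  let U : Matrix (Fin d) (Fin d) (Kt Fq) := Matrix.of fun i j => HahnSeries.single (-(b i)) 1 * V i j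
  have hUc : ∀ i j n, (U i j).coeff n = (V i j).coeff (n + b i) := by
    intro i j n; simp [U, HahnSeries.coeff_single_mul]
  have hU0 : ∀ i j, AA Fq 0 (U i j) := by
    intro i j n hn
    rw [hUc, hV]
    apply hP j i
    split_ifs with h
    · subst h; omega
    · omega
  obtain ⟨hUd, hUo⟩ := det_unit Fq U hU0
    (fun i j hij => by
      rw [hUc, hV]; apply hP j i; rw [if_neg hij]; omega)
    (fun i => by rw [hUc, zero_add]; exact hVd i)
  have hUV : U.det = HahnSeries.single (-∑ i, b i) 1 * V.det := by
    rw [show U = Matrix.of fun i j => HahnSeries.single (-(b i)) 1 * V i j from rfl,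
      Matrix.det_mul_column]
    congr 1
    have : ∀ s : Finset (Fin d), ∏ i ∈ s, (HahnSeries.single (-(b i)) 1 : Kt Fq)
        = HahnSeries.single (-∑ i ∈ s, b i) 1 := by
      intro s
      induction s using Finset.induction_on with
      | empty => simp
      | insert a s ha ih =>
        rw [Finset.prod_insert ha, ih, HahnSeries.single_mul_single, Finset.sum_insert ha, neg_add, one_mul]
    exact this _
  -- covering
  have hcov : ∀ w : Fin d → Kt Fq, ∃ p : Fin d → Polynomial Fq,
      ∀ i, AA Fq (b i + 1) (w i - g.mulVec (fun j => polyK Fq (PM.mulVec p j)) i) := by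
    intro w
    let w' : Fin d → Kt Fq := fun i => HahnSeries.single (-(b i)) 1 * w i
    choose p hp using fun j => exists_poly Fq (U⁻¹.mulVec w' j)
    refine ⟨p, fun i => ?_⟩
    have h := AA_mulVec Fq U _ hU0 hp i
    have e1 : U.mulVec (fun j => U⁻¹.mulVec w' j - polyK Fq (p j)) i
        = w' i - U.mulVec (fun j => polyK Fq (p j)) i := by
      have : (fun j => U⁻¹.mulVec w' j - polyK Fq (p j)) = U⁻¹.mulVec w' - fun j => polyK Fq (p j) := rfl
      rw [this, Matrix.mulVec_sub, Matrix.mulVec_mulVec,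
        Matrix.mul_nonsing_inv _ (isUnit_iff_ne_zero.2 hUd), Matrix.one_mulVec, Pi.sub_apply]
    have e2 : U.mulVec (fun j => polyK Fq (p j)) i
        = HahnSeries.single (-(b i)) 1 * V.mulVec (fun j => polyK Fq (p j)) i := by
      simp [U, Matrix.mulVec, dotProduct, Finset.mul_sum, mul_assoc]
    have e3 : V.mulVec (fun j => polyK Fq (p j))
        = g.mulVec (fun j => polyK Fq (PM.mulVec p j)) := by
      simp only [V]
      rw [← Matrix.mulVec_mulVec]
      congr 1
      funext j
      simp [Matrix.mulVec, dotProduct]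
    rw [e1, e2, e3, ← mul_sub] at h
    intro n hn
    have := h (n - b i) (by omega)
    rw [HahnSeries.coeff_single_mul] at this
    simpa using this
  -- PM is unimodular
  have hsurj : Function.Surjective PM.mulVec := by
    intro c
    obtain ⟨p, hp⟩ := hcov (g.mulVec fun j => polyK Fq (c j))
    refine ⟨p, ?_⟩
    have : (fun j => c j - PM.mulVec p j) = 0 := by
      apply hb
      intro i
      have e : (fun j => polyK Fq (c j - PM.mulVec p j)) =
        (fun j => polyK Fq (c j)) - (fun j => polyK Fq (PM.mulVec p j)) := by
        funext j; simp
      rw [e, Matrix.mulVec_sub, Pi.sub_apply]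
      exact hp i
    funext j
    exact (sub_eq_zero.1 (congrFun this j)).symm
  have hPu : IsUnit PM := Matrix.mulVec_surjective_iff_isUnit.1 hsurj
  rw [Matrix.isUnit_iff_isUnit_det, Polynomial.isUnit_iff] at hPu
  obtain ⟨r, hr, hrP⟩ := hPu
  have hdetV : V.det = g.det * HahnSeries.single 0 r := by
    simp only [V]
    rw [Matrix.det_mul, ← RingHom.map_det, ← hrP, ← Polynomial.monomial_zero_left, polyK_monomial]
    simp
  have hs0 : (HahnSeries.single (0 : ℤ) r : Kt Fq) ≠ 0 := HahnSeries.single_ne_zero hr.ne_zero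
  have hs1 : (HahnSeries.single (-∑ i, b i) 1 : Kt Fq) ≠ 0 := HahnSeries.single_ne_zero one_ne_zero
  refine ⟨b, ?_, fun w => ?_⟩
  · rw [hUV, hdetV, HahnSeries.order_mul hs1 (mul_ne_zero hg0 hs0), HahnSeries.order_mul hg0 hs0, hg1,
      HahnSeries.order_single hr.ne_zero, HahnSeries.order_single one_ne_zero] at hUo
    omega
  · obtain ⟨p, hp⟩ := hcov w
    exact ⟨_, hp⟩

/-- function field analogue of Minkowski's conjecture.
For every unimodular lattice `Λ ⊆ K̃^d`, `μ(Λ) ≤ q^{-d}`. -/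
theorem mink_le {d : ℕ} (hd : 2 ≤ d)
    (g : Matrix (Fin d) (Fin d) (Kt Fq)) (hg : Kabs Fq g.det = 1) :
    mink Fq (lattice Fq g) ≤ (Fintype.card Fq : ℝ) ^ (-(d : ℤ)) := by
  obtain ⟨b, hb, h⟩ := main_aux Fq g hg
  refine ciSup_le fun w => ?_
  obtain ⟨c, hc⟩ := h w
  have hbdd : BddBelow (Set.range fun u : lattice Fq g => Nprod Fq (w - u.1)) := by
    refine ⟨0, ?_⟩
    rintro _ ⟨u, rfl⟩
    exact Finset.prod_nonneg fun i _ => Kabs_nonneg Fq _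
  refine (ciInf_le hbdd ⟨g.mulVec fun j => polyK Fq (c j), c, rfl⟩).trans ?_
  unfold Nprod
  refine (Finset.prod_le_prod (fun i _ => Kabs_nonneg Fq _)
    (fun i _ => Kabs_le Fq (by simpa using hc i))).trans (le_of_eq ?_)
  have hq : (Fintype.card Fq : ℝ) ≠ 0 := by have := card_gt Fq; positivity
  have : ∀ s : Finset (Fin d), ∏ i ∈ s, (Fintype.card Fq : ℝ) ^ (-(b i + 1))
        = (Fintype.card Fq : ℝ) ^ (-∑ i ∈ s, (b i + 1)) := by
    intro s
    induction s using Finset.induction_on with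
    | empty => simp
    | insert a s ha ih =>
      rw [Finset.prod_insert ha, ih, Finset.sum_insert ha, neg_add (b a + 1), zpow_add₀ hq]
  rw [this, Finset.sum_add_distrib, hb]
  simp
end
end
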